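/- Let n ≥ 2 and define the probability density f(y) = (1/B(1/2, (n−1)/2)) · n·e^{ny/2}/(1 + e^{ny})^{n/2} on ℝ. Then y ↦ y²·f(y) is integrable and the variance of f, namely ∫_ℝ y² f(y) dy − (∫_ℝ y f(y) dy)², equals (1/n²)·(ψ'((n−1)/2) + π²/2), where ψ'(t) is the second derivative of t ↦ log Γ(t) (the trigamma function). -/

import Mathlib

/-!
If `X` is Beta distributed with parameters `a` and `b`, then `Y = log (X / (1 - X))` has the
density `σ(y)ᵃ σ(-y)ᵇ / B(a, b)`, where `σ` is the sigmoid function. Since `eʸ = σ(y) / σ(-y)`,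
multiplying this density by `e^{ty}` only replaces `(a, b)` by `(a + t, b - t)`. As each such
density integrates to one, `Y` has the moment generating function `B(a + t, b - t) / B(a, b)`, and
the second derivative of its logarithm at `0` shows `Var Y = ψ'(a) + ψ'(b)`.

The density `f` is the law of `Y / n` for `a = 1/2` and `b = (n - 1)/2`, and differentiating Euler's
reflection formula twice gives `ψ'(1/2) = π²/2`.
-/

open MeasureTheory Real

/-- The centered Logistic-Beta density
`f(y) = (1/B(1/2,(n-1)/2))·n·e^{ny/2}/(1+e^{ny})^{n/2}`, where
`B(a,b) = Γ(a)Γ(b)/Γ(a+b)`. -/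
noncomputable def logisticBetaDensity (n : ℕ) (y : ℝ) : ℝ :=
  (Real.Gamma ((n : ℝ) / 2) / (Real.Gamma (1 / 2) * Real.Gamma (((n : ℝ) - 1) / 2)))
    * ((n : ℝ) * Real.exp ((n : ℝ) * y / 2)
        / (1 + Real.exp ((n : ℝ) * y)) ^ ((n : ℝ) / 2))

/-- The trigamma function `ψ'`, realized as the second derivative of `t ↦ log Γ(t)`. -/
noncomputable def trigammaFn (t : ℝ) : ℝ :=
  deriv (deriv (fun s => Real.log (Real.Gamma s))) t

open Filter ProbabilityTheory Set Topology

lemma iteratedDeriv_comp_mul_left {𝕜 F : Type*} [NontriviallyNormedField 𝕜]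
    [NormedAddCommGroup F] [NormedSpace 𝕜 F] (n : ℕ) (f : 𝕜 → F) (c : 𝕜) :
    iteratedDeriv n (fun x => f (c * x)) = fun x => c ^ n • iteratedDeriv n f (c * x) := by
  induction n with
  | zero => simp only [iteratedDeriv_zero, pow_zero, one_smul]
  | succ n ih =>
    funext x
    rw [iteratedDeriv_succ, ih, deriv_fun_const_smul_field, deriv_comp_mul_left, smul_smul,
      ← pow_succ, iteratedDeriv_succ]

lemma pow_mul_mul_comp_mul_left {c : ℝ} (hc : c ≠ 0) (k : ℕ) (f : ℝ → ℝ) (y : ℝ) :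
    y ^ k * (c * f (c * y)) = c / c ^ k * ((c * y) ^ k * f (c * y)) := by
  rw [mul_pow]
  field_simp

lemma integrable_pow_mul_comp_mul_left {c : ℝ} (hc : c ≠ 0) {k : ℕ} {f : ℝ → ℝ}
    (hf : Integrable fun y => y ^ k * f y) : Integrable fun y => y ^ k * (c * f (c * y)) := by
  simpa only [pow_mul_mul_comp_mul_left hc] using (hf.comp_mul_left' hc).const_mul (c / c ^ k)

lemma integral_pow_mul_comp_mul_left {c : ℝ} (hc : 0 < c) (k : ℕ) (f : ℝ → ℝ) :
    ∫ y, y ^ k * (c * f (c * y)) = (∫ y, y ^ k * f y) / c ^ k := by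
  simp only [pow_mul_mul_comp_mul_left hc.ne']
  rw [integral_const_mul, Measure.integral_comp_mul_left (fun u => u ^ k * f u), smul_eq_mul,
    abs_of_pos (inv_pos.2 hc)]
  field_simp

lemma variance_eq_iteratedDeriv_two_cgf_zero {Ω : Type*} {m : MeasurableSpace Ω} {μ : Measure Ω}
    [IsProbabilityMeasure μ] {X : Ω → ℝ} (h : 0 ∈ interior (integrableExpSet X μ)) :
    Var[X; μ] = iteratedDeriv 2 (cgf X μ) 0 := by
  simp [← variance_tilted_mul h]

section Trigamma

variable {a b s t x : ℝ}

lemma analyticAt_Gamma_of_pos (hs : 0 < s) : AnalyticAt ℝ Gamma s := by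
  have hre : ∀ᶠ z : ℂ in 𝓝 s, 0 < z.re :=
    Complex.continuous_re.continuousAt.eventually (lt_mem_nhds (by simpa using hs))
  have hC : AnalyticAt ℂ Complex.Gamma s := by
    rw [Complex.analyticAt_iff_eventually_differentiableAt]
    filter_upwards [hre] with z hz
    refine Complex.differentiableAt_Gamma z fun m hm => ?_
    simp only [hm, Complex.neg_re, Complex.natCast_re, Left.neg_pos_iff] at hz
    exact hz.not_ge m.cast_nonneg
  simpa only [Complex.Gamma_ofReal, Complex.ofReal_re] using hC.re_ofReal

lemma contDiffAt_log_Gamma {n : WithTop ℕ∞} (hs : 0 < s) :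
    ContDiffAt ℝ n (fun s => log (Gamma s)) s :=
  ((analyticAt_Gamma_of_pos hs).log (Gamma_pos_of_pos hs)).contDiffAt

lemma trigammaFn_eq_iteratedDeriv : trigammaFn = iteratedDeriv 2 fun s => log (Gamma s) := by
  rw [iteratedDeriv_succ, iteratedDeriv_one]
  rfl

lemma log_beta (ha : 0 < a) (hb : 0 < b) :
    log (beta a b) = -log (Gamma (a + b)) + (log (Gamma a) + log (Gamma b)) := by
  have hΓa := (Gamma_pos_of_pos ha).ne'
  have hΓb := (Gamma_pos_of_pos hb).ne'
  rw [beta, log_div (mul_ne_zero hΓa hΓb) (Gamma_pos_of_pos (add_pos ha hb)).ne',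
    log_mul hΓa hΓb]
  ring

lemma iteratedDeriv_two_log_beta (ha : 0 < a + t) (hb : 0 < b - t) :
    iteratedDeriv 2 (fun u => log (beta (a + u) (b - u))) t =
      trigammaFn (a + t) + trigammaFn (b - t) := by
  have hlog : (fun u => log (beta (a + u) (b - u))) =ᶠ[𝓝 t] fun u =>
      -log (Gamma (a + b)) + (log (Gamma (a + u)) + log (Gamma (b - u))) := by
    filter_upwards [Ioo_mem_nhds (show -a < t by linarith) (show t < b by linarith)] with u hu
    rw [log_beta (by linarith [hu.1]) (by linarith [hu.2]), add_add_sub_cancel]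
  have hΓa : ContDiffAt ℝ (2 : ℕ) (fun u => log (Gamma (a + u))) t :=
    (contDiffAt_log_Gamma ha).comp t (contDiffAt_const.add contDiffAt_id)
  have hΓb : ContDiffAt ℝ (2 : ℕ) (fun u => log (Gamma (b - u))) t :=
    (contDiffAt_log_Gamma hb).comp t (contDiffAt_const.sub contDiffAt_id)
  rw [hlog.iteratedDeriv_eq, iteratedDeriv_const_add two_pos, iteratedDeriv_fun_add hΓa hΓb,
    iteratedDeriv_comp_const_add 2 (fun s => log (Gamma s)),
    iteratedDeriv_comp_const_sub 2 (fun s => log (Gamma s)), ← trigammaFn_eq_iteratedDeriv]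
  simp only [neg_one_sq, one_smul]

lemma iteratedDeriv_two_log_sin (hx : sin x ≠ 0) :
    iteratedDeriv 2 (fun x => log (sin x)) x = -(1 / sin x ^ 2) := by
  have hderiv : deriv (fun x => log (sin x)) =ᶠ[𝓝 x] fun x => cos x / sin x := by
    filter_upwards [continuous_sin.continuousAt.eventually_ne hx] with u hu
    exact ((hasDerivAt_sin u).log hu).deriv
  rw [iteratedDeriv_succ, iteratedDeriv_one, hderiv.deriv_eq,
    ((hasDerivAt_cos x).fun_div (hasDerivAt_sin x) hx).deriv, ← neg_div, ← sin_sq_add_cos_sq x]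
  ring

lemma beta_one_sub (s : ℝ) : beta s (1 - s) = π / sin (π * s) := by
  rw [beta, Gamma_mul_Gamma_one_sub, add_sub_cancel, Gamma_one, div_one]

lemma trigammaFn_add_trigammaFn_one_sub (hs₀ : 0 < s) (hs₁ : s < 1) :
    trigammaFn s + trigammaFn (1 - s) = π ^ 2 / sin (π * s) ^ 2 := by
  have hsin : 0 < sin (π * s) :=
    sin_pos_of_pos_of_lt_pi (by positivity) (mul_lt_of_lt_one_right pi_pos hs₁)
  have hlog : (fun u => log (beta (0 + u) (1 - u))) =ᶠ[𝓝 s]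
      fun u => log π - log (sin (π * u)) := by
    have hcont : ContinuousAt (fun u => sin (π * u)) s := by fun_prop
    filter_upwards [hcont.eventually_ne hsin.ne'] with u hu
    rw [zero_add, beta_one_sub, log_div pi_ne_zero hu]
  have h := iteratedDeriv_two_log_beta (a := 0) (b := 1) (t := s) (by linarith) (by linarith)
  rw [hlog.iteratedDeriv_eq, iteratedDeriv_const_sub two_pos, iteratedDeriv_neg,
    iteratedDeriv_comp_mul_left 2 (fun x => log (sin x))] at h
  simp only [iteratedDeriv_two_log_sin hsin.ne', zero_add, smul_eq_mul] at h
  rw [← h]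
  ring

lemma trigammaFn_one_half : trigammaFn (1 / 2) = π ^ 2 / 2 := by
  have h := trigammaFn_add_trigammaFn_one_sub (s := 1 / 2) (by norm_num) (by norm_num)
  rw [sub_half, mul_one_div, sin_pi_div_two] at h
  linarith

end Trigamma

section Sigmoid

lemma exp_eq_sigmoid_div_sigmoid_neg (y : ℝ) : exp y = sigmoid y / sigmoid (-y) := by
  rw [← sigmoid_mul_rexp_neg, div_mul_cancel_left₀ (sigmoid_pos y).ne', exp_neg, inv_inv]

lemma exp_mul_eq_sigmoid_rpow_div (t y : ℝ) :
    exp (t * y) = sigmoid y ^ t / sigmoid (-y) ^ t := by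
  rw [mul_comm, exp_mul, exp_eq_sigmoid_div_sigmoid_neg,
    div_rpow (sigmoid_nonneg y) (sigmoid_nonneg (-y))]

lemma lintegral_Ioo_eq_lintegral_sigmoid (g : ℝ → ENNReal) :
    ∫⁻ x in Ioo 0 1, g x =
      ∫⁻ y, ENNReal.ofReal (sigmoid y * sigmoid (-y)) * g (sigmoid y) := by
  rw [← range_sigmoid, ← image_univ, lintegral_image_eq_lintegral_abs_deriv_mul .univ
    (fun y _ => (hasDerivAt_sigmoid y).hasDerivWithinAt) sigmoid_injective.injOn, setLIntegral_univ]
  refine lintegral_congr fun y => ?_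
  rw [← sigmoid_neg, abs_of_pos (mul_pos (sigmoid_pos y) (sigmoid_pos (-y)))]

lemma sigmoid_rpow_mul_sigmoid_neg_rpow (a b y : ℝ) :
    sigmoid y ^ a * sigmoid (-y) ^ b = exp (a * y) / (1 + exp y) ^ (a + b) := by
  have hy' := sigmoid_pos (-y)
  calc sigmoid y ^ a * sigmoid (-y) ^ b
      = exp (a * y) * sigmoid (-y) ^ (a + b) := by
        rw [exp_mul_eq_sigmoid_rpow_div, rpow_add hy']
        field_simp
    _ = exp (a * y) / (1 + exp y) ^ (a + b) := by
        rw [sigmoid_def, neg_neg, inv_rpow (by positivity), div_eq_mul_inv]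

end Sigmoid

/-- The density of the standard logistic-beta distribution with parameters `a` and `b`, that is of
`log (X / (1 - X))` where `X` has the beta distribution with these parameters. It is written
with `sigmoid (-y) = 1 - sigmoid y`, which makes the symmetry between `a` and `b` visible. -/
noncomputable def logisticBetaPDFReal (a b y : ℝ) : ℝ :=
  sigmoid y ^ a * sigmoid (-y) ^ b / beta a b

/-- The standard logistic-beta distribution with parameters `a` and `b`, as a measure on `ℝ`. -/
noncomputable def logisticBetaMeasure (a b : ℝ) : Measure ℝ :=
  volume.withDensity fun y => ENNReal.ofReal (logisticBetaPDFReal a b y)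

section LogisticBeta

variable {a b t : ℝ}

lemma logisticBetaPDFReal_pos (ha : 0 < a) (hb : 0 < b) (y : ℝ) : 0 < logisticBetaPDFReal a b y :=
  div_pos (mul_pos (rpow_pos_of_pos (sigmoid_pos y) a) (rpow_pos_of_pos (sigmoid_pos (-y)) b))
    (beta_pos ha hb)

@[fun_prop]
lemma measurable_logisticBetaPDFReal (a b : ℝ) : Measurable (logisticBetaPDFReal a b) := by
  have hσ : Measurable sigmoid := continuous_sigmoid.measurable
  unfold logisticBetaPDFReal
  fun_prop

lemma logisticBetaPDFReal_eq_mul_betaPDFReal (a b y : ℝ) :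
    logisticBetaPDFReal a b y = sigmoid y * sigmoid (-y) * betaPDFReal a b (sigmoid y) := by
  have hy := sigmoid_pos y
  have hy' := sigmoid_pos (-y)
  rw [betaPDFReal, if_pos ⟨hy, sigmoid_lt_one y⟩, ← sigmoid_neg, rpow_sub_one hy.ne',
    rpow_sub_one hy'.ne', logisticBetaPDFReal]
  field_simp

lemma lintegral_logisticBetaPDFReal (ha : 0 < a) (hb : 0 < b) :
    ∫⁻ y, ENNReal.ofReal (logisticBetaPDFReal a b y) = 1 := by
  have hsupp : (betaPDF a b).support ⊆ Ioo 0 1 := fun x hx => by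
    by_contra h
    exact hx (by rw [betaPDF, betaPDFReal, if_neg (show ¬(0 < x ∧ x < 1) from h),
      ENNReal.ofReal_zero])
  rw [← lintegral_betaPDF_eq_one ha hb, ← setLIntegral_eq_of_support_subset hsupp,
    lintegral_Ioo_eq_lintegral_sigmoid]
  refine lintegral_congr fun y => ?_
  rw [logisticBetaPDFReal_eq_mul_betaPDFReal, betaPDF,
    ENNReal.ofReal_mul (mul_pos (sigmoid_pos y) (sigmoid_pos (-y))).le]

lemma isProbabilityMeasure_logisticBetaMeasure (ha : 0 < a) (hb : 0 < b) :
    IsProbabilityMeasure (logisticBetaMeasure a b) where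
  measure_univ := by
    rw [logisticBetaMeasure, withDensity_apply _ .univ, setLIntegral_univ,
      lintegral_logisticBetaPDFReal ha hb]

lemma integral_logisticBetaMeasure (ha : 0 < a) (hb : 0 < b) (g : ℝ → ℝ) :
    ∫ y, g y ∂logisticBetaMeasure a b = ∫ y, g y * logisticBetaPDFReal a b y := by
  rw [logisticBetaMeasure, integral_withDensity_eq_integral_toReal_smul (by fun_prop) (by simp)]
  simp only [ENNReal.toReal_ofReal (logisticBetaPDFReal_pos ha hb _).le, smul_eq_mul, mul_comm]

lemma integrable_logisticBetaMeasure_iff (ha : 0 < a) (hb : 0 < b) (g : ℝ → ℝ) :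
    Integrable g (logisticBetaMeasure a b) ↔
      Integrable fun y => g y * logisticBetaPDFReal a b y := by
  rw [logisticBetaMeasure, integrable_withDensity_iff (by fun_prop) (by simp)]
  simp only [ENNReal.toReal_ofReal (logisticBetaPDFReal_pos ha hb _).le]

lemma integrable_logisticBetaPDFReal (ha : 0 < a) (hb : 0 < b) :
    Integrable (logisticBetaPDFReal a b) := by
  have := isProbabilityMeasure_logisticBetaMeasure ha hb
  simpa only [one_mul] using
    (integrable_logisticBetaMeasure_iff ha hb fun _ => 1).1 (integrable_const 1)

lemma integral_logisticBetaPDFReal (ha : 0 < a) (hb : 0 < b) :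
    ∫ y, logisticBetaPDFReal a b y = 1 := by
  have := isProbabilityMeasure_logisticBetaMeasure ha hb
  simpa using (integral_logisticBetaMeasure ha hb fun _ => 1).symm

lemma exp_mul_logisticBetaPDFReal (ha : 0 < a + t) (hb : 0 < b - t) (y : ℝ) :
    exp (t * y) * logisticBetaPDFReal a b y =
      beta (a + t) (b - t) / beta a b * logisticBetaPDFReal (a + t) (b - t) y := by
  have hβ := (beta_pos ha hb).ne'
  rw [exp_mul_eq_sigmoid_rpow_div, logisticBetaPDFReal, logisticBetaPDFReal,
    rpow_add (sigmoid_pos y), rpow_sub (sigmoid_pos (-y))]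
  field_simp

lemma Ioo_subset_integrableExpSet_logisticBetaMeasure (ha : 0 < a) (hb : 0 < b) :
    Ioo (-a) b ⊆ integrableExpSet id (logisticBetaMeasure a b) := by
  rintro t ⟨hat, htb⟩
  replace hat : 0 < a + t := by linarith
  replace htb : 0 < b - t := by linarith
  refine (integrable_logisticBetaMeasure_iff ha hb _).2 ?_
  simpa only [id, exp_mul_logisticBetaPDFReal hat htb] using
    (integrable_logisticBetaPDFReal hat htb).const_mul _

lemma mgf_id_logisticBetaMeasure (ha : 0 < a) (hb : 0 < b) (hat : 0 < a + t) (htb : 0 < b - t) :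
    mgf id (logisticBetaMeasure a b) t = beta (a + t) (b - t) / beta a b := by
  simp only [mgf, id, integral_logisticBetaMeasure ha hb, exp_mul_logisticBetaPDFReal hat htb,
    integral_const_mul, integral_logisticBetaPDFReal hat htb, mul_one]

lemma zero_mem_interior_integrableExpSet_logisticBetaMeasure (ha : 0 < a) (hb : 0 < b) :
    0 ∈ interior (integrableExpSet id (logisticBetaMeasure a b)) :=
  interior_maximal (Ioo_subset_integrableExpSet_logisticBetaMeasure ha hb) isOpen_Ioo
    ⟨neg_lt_zero.2 ha, hb⟩

lemma memLp_id_logisticBetaMeasure (ha : 0 < a) (hb : 0 < b) (p : NNReal) :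
    MemLp id p (logisticBetaMeasure a b) :=
  memLp_of_mem_interior_integrableExpSet
    (zero_mem_interior_integrableExpSet_logisticBetaMeasure ha hb) p

lemma variance_id_logisticBetaMeasure (ha : 0 < a) (hb : 0 < b) :
    Var[id; logisticBetaMeasure a b] = trigammaFn a + trigammaFn b := by
  have := isProbabilityMeasure_logisticBetaMeasure ha hb
  have hcgf : cgf id (logisticBetaMeasure a b) =ᶠ[𝓝 0]
      fun t => -log (beta a b) + log (beta (a + t) (b - t)) := by
    filter_upwards [Ioo_mem_nhds (neg_lt_zero.2 ha) hb] with t ht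
    have hat : 0 < a + t := by linarith [ht.1]
    have htb : 0 < b - t := by linarith [ht.2]
    rw [cgf, mgf_id_logisticBetaMeasure ha hb hat htb,
      log_div (beta_pos hat htb).ne' (beta_pos ha hb).ne', neg_add_eq_sub]
  rw [variance_eq_iteratedDeriv_two_cgf_zero
      (zero_mem_interior_integrableExpSet_logisticBetaMeasure ha hb),
    hcgf.iteratedDeriv_eq, iteratedDeriv_const_add two_pos,
    iteratedDeriv_two_log_beta (by simpa) (by simpa), add_zero, sub_zero]

end LogisticBeta

lemma logisticBetaDensity_eq (n : ℕ) (y : ℝ) :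
    logisticBetaDensity n y = n * logisticBetaPDFReal (1 / 2) ((n - 1) / 2) (n * y) := by
  have hparam : (1 : ℝ) / 2 + (n - 1) / 2 = n / 2 := by ring
  rw [logisticBetaPDFReal, sigmoid_rpow_mul_sigmoid_neg_rpow, beta, hparam, logisticBetaDensity,
    one_div_mul_eq_div, div_div_eq_mul_div]
  ring

theorem stmt8_general {a b c : ℝ} (ha : 0 < a) (hb : 0 < b) (hc : 0 < c) :
    Integrable (fun y : ℝ => y ^ 2 * (c * logisticBetaPDFReal a b (c * y))) ∧
    (∫ y : ℝ, y ^ 2 * (c * logisticBetaPDFReal a b (c * y)))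
        - (∫ y : ℝ, y * (c * logisticBetaPDFReal a b (c * y))) ^ 2
      = (1 / c ^ 2) * (trigammaFn a + trigammaFn b) := by
  have := isProbabilityMeasure_logisticBetaMeasure ha hb
  have hL2 := memLp_id_logisticBetaMeasure ha hb 2
  have hint := (integrable_logisticBetaMeasure_iff ha hb _).1 hL2.integrable_sq
  have hvar : trigammaFn a + trigammaFn b =
      (∫ y, y ^ 2 * logisticBetaPDFReal a b y) - (∫ y, y * logisticBetaPDFReal a b y) ^ 2 := by
    rw [← variance_id_logisticBetaMeasure ha hb, variance_eq_sub hL2,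
      integral_logisticBetaMeasure ha hb, integral_logisticBetaMeasure ha hb]
    rfl
  have hmean : ∫ y, y * (c * logisticBetaPDFReal a b (c * y)) =
      (∫ y, y * logisticBetaPDFReal a b y) / c := by
    simpa only [pow_one] using integral_pow_mul_comp_mul_left hc 1 (logisticBetaPDFReal a b)
  refine ⟨integrable_pow_mul_comp_mul_left hc.ne' hint, ?_⟩
  rw [integral_pow_mul_comp_mul_left hc, hmean, hvar]
  ring

/-- For `n ≥ 2`, `y ↦ y²·f(y)` is integrable for the centered Logistic-Beta
density `f`, and the variance `∫ y² f(y) dy - (∫ y f(y) dy)²` equals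
`(1/n²)(ψ'((n-1)/2) + π²/2)`. -/
theorem stmt8 (n : ℕ) (hn : 2 ≤ n) :
    Integrable (fun y : ℝ => y ^ 2 * logisticBetaDensity n y) ∧
    (∫ y : ℝ, y ^ 2 * logisticBetaDensity n y) - (∫ y : ℝ, y * logisticBetaDensity n y) ^ 2
      = (1 / (n : ℝ) ^ 2) * (trigammaFn (((n : ℝ) - 1) / 2) + π ^ 2 / 2) := by
  have hb : 0 < ((n : ℝ) - 1) / 2 := by
    have : (2 : ℝ) ≤ n := by exact_mod_cast hn
    linarith
  simpa only [logisticBetaDensity_eq, trigammaFn_one_half, add_comm] using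
    stmt8_general one_half_pos hb (c := n) (by positivity)
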